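/- Fix φ ∈ (0,1) and γ₁, γ₂ > 0, and define Δ(γ₁,γ₂) := (2 − γ₁ − γ₂ + γ₁γ₂φ)² − 4(1 − γ₁)(1 − γ₂) and its partial derivative in γ₂, D(γ₁,γ₂) := 2(2 − γ₁ − γ₂ + γ₁γ₂φ)(γ₁φ − 1) + 4(1 − γ₁). If Δ(γ₁,γ₂) ≥ 0, then: if γ₁ ≥ 1, 2√(Δ(γ₁,γ₂))·|γ₁φ − 1| ≤ |D(γ₁,γ₂)|; and if γ₁ ∈ (0,1), 2√(Δ(γ₁,γ₂))·|γ₁φ − 1| ≥ |D(γ₁,γ₂)|. -/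

import Mathlib

/-! For fixed `φ` and `γ₁`, `Δ` is a quadratic polynomial in `γ₂` with leading coefficient
`(γ₁ φ - 1)²` and derivative `D`. For any quadratic `q` with leading coefficient `a`, the quantity
`(q')² - 4 a q` is constant, equal to the discriminant of `q`. So `D² - 4 (γ₁ φ - 1)² Δ` is the
discriminant of `Δ` in `γ₂`, which is `(4 γ₁)² (γ₁ - 1) φ (1 - φ)`, and its sign decides which of
`|D|` and `2 √Δ |γ₁ φ - 1|` is larger. -/

section Quadratic

theorem two_mul_mul_add_sq_eq_discrim_add {R : Type*} [CommRing R] (a b c x : R) :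
    (2 * a * x + b) ^ 2 = discrim a b c + 4 * a * (a * x ^ 2 + b * x + c) := by
  rw [discrim]
  ring

variable {k b c x : ℝ}

theorem two_mul_mul_add_sq_eq_discrim_add_sqrt_sq (hq : 0 ≤ k ^ 2 * x ^ 2 + b * x + c) :
    (2 * k ^ 2 * x + b) ^ 2 =
      discrim (k ^ 2) b c + (2 * √(k ^ 2 * x ^ 2 + b * x + c) * |k|) ^ 2 := by
  rw [two_mul_mul_add_sq_eq_discrim_add (k ^ 2) b c x, mul_pow, mul_pow, Real.sq_sqrt hq, sq_abs]
  ring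

theorem two_mul_sqrt_mul_abs_le_abs_iff (hq : 0 ≤ k ^ 2 * x ^ 2 + b * x + c) :
    2 * √(k ^ 2 * x ^ 2 + b * x + c) * |k| ≤ |2 * k ^ 2 * x + b| ↔ 0 ≤ discrim (k ^ 2) b c := by
  rw [← sq_le_sq₀ (by positivity) (abs_nonneg _), sq_abs,
    two_mul_mul_add_sq_eq_discrim_add_sqrt_sq hq, le_add_iff_nonneg_left]

theorem abs_le_two_mul_sqrt_mul_abs_iff (hq : 0 ≤ k ^ 2 * x ^ 2 + b * x + c) :
    |2 * k ^ 2 * x + b| ≤ 2 * √(k ^ 2 * x ^ 2 + b * x + c) * |k| ↔ discrim (k ^ 2) b c ≤ 0 := by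
  rw [← sq_le_sq₀ (abs_nonneg _) (by positivity), sq_abs,
    two_mul_mul_add_sq_eq_discrim_add_sqrt_sq hq, add_le_iff_nonpos_left]

end Quadratic

section CharDiscrim

variable {R : Type*} [CommRing R]

/-- The discriminant `Δ(γ₁, γ₂)` of the quadratic
`z² - (2 - γ₁ - γ₂ + γ₁ γ₂ φ) z + (1 - γ₁) (1 - γ₂)` in `z`. -/
def charDiscrim (φ γ₁ γ₂ : R) : R :=
  (2 - γ₁ - γ₂ + γ₁ * γ₂ * φ) ^ 2 - 4 * (1 - γ₁) * (1 - γ₂)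

/-- The partial derivative `D(γ₁, γ₂)` of `charDiscrim` in `γ₂`, written out explicitly. -/
def charDiscrimDeriv (φ γ₁ γ₂ : R) : R :=
  2 * (2 - γ₁ - γ₂ + γ₁ * γ₂ * φ) * (γ₁ * φ - 1) + 4 * (1 - γ₁)

/-- The coefficient of `γ₂` in `charDiscrim φ γ₁ γ₂`, viewed as a polynomial in `γ₂`. -/
def charDiscrimLinearCoeff (φ γ₁ : R) : R :=
  2 * (2 - γ₁) * (γ₁ * φ - 1) + 4 * (1 - γ₁)

theorem charDiscrim_eq_quadratic (φ γ₁ γ₂ : R) :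
    charDiscrim φ γ₁ γ₂ =
      (γ₁ * φ - 1) ^ 2 * γ₂ ^ 2 + charDiscrimLinearCoeff φ γ₁ * γ₂ + γ₁ ^ 2 := by
  rw [charDiscrim, charDiscrimLinearCoeff]
  ring

theorem charDiscrimDeriv_eq_linear (φ γ₁ γ₂ : R) :
    charDiscrimDeriv φ γ₁ γ₂ =
      2 * (γ₁ * φ - 1) ^ 2 * γ₂ + charDiscrimLinearCoeff φ γ₁ := by
  rw [charDiscrimDeriv, charDiscrimLinearCoeff]
  ring

theorem discrim_charDiscrim (φ γ₁ : R) :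
    discrim ((γ₁ * φ - 1) ^ 2) (charDiscrimLinearCoeff φ γ₁) (γ₁ ^ 2) =
      (4 * γ₁) ^ 2 * ((γ₁ - 1) * (φ * (1 - φ))) := by
  rw [discrim, charDiscrimLinearCoeff]
  ring

end CharDiscrim

theorem stmt13_general (φ γ₁ γ₂ : ℝ) (hΔ : 0 ≤ charDiscrim φ γ₁ γ₂) :
    (0 ≤ (γ₁ - 1) * (φ * (1 - φ)) →
      2 * √(charDiscrim φ γ₁ γ₂) * |γ₁ * φ - 1| ≤ |charDiscrimDeriv φ γ₁ γ₂|) ∧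
    ((γ₁ - 1) * (φ * (1 - φ)) ≤ 0 →
      |charDiscrimDeriv φ γ₁ γ₂| ≤ 2 * √(charDiscrim φ γ₁ γ₂) * |γ₁ * φ - 1|) := by
  rw [charDiscrim_eq_quadratic] at hΔ
  rw [charDiscrim_eq_quadratic, charDiscrimDeriv_eq_linear, two_mul_sqrt_mul_abs_le_abs_iff hΔ,
    abs_le_two_mul_sqrt_mul_abs_iff hΔ, discrim_charDiscrim]
  exact ⟨mul_nonneg (sq_nonneg _), mul_nonpos_of_nonneg_of_nonpos (sq_nonneg _)⟩

theorem stmt13 (φ γ₁ γ₂ : ℝ) (hφ : φ ∈ Set.Ioo (0 : ℝ) 1)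
    (hγ₁ : 0 < γ₁) (hγ₂ : 0 < γ₂)
    (hΔ : 0 ≤ (2 - γ₁ - γ₂ + γ₁ * γ₂ * φ) ^ 2 - 4 * (1 - γ₁) * (1 - γ₂)) :
    (1 ≤ γ₁ →
      2 * Real.sqrt ((2 - γ₁ - γ₂ + γ₁ * γ₂ * φ) ^ 2 - 4 * (1 - γ₁) * (1 - γ₂))
          * |γ₁ * φ - 1|
        ≤ |2 * (2 - γ₁ - γ₂ + γ₁ * γ₂ * φ) * (γ₁ * φ - 1) + 4 * (1 - γ₁)|) ∧
    (γ₁ ∈ Set.Ioo (0 : ℝ) 1 →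
      |2 * (2 - γ₁ - γ₂ + γ₁ * γ₂ * φ) * (γ₁ * φ - 1) + 4 * (1 - γ₁)|
        ≤ 2 * Real.sqrt ((2 - γ₁ - γ₂ + γ₁ * γ₂ * φ) ^ 2 - 4 * (1 - γ₁) * (1 - γ₂))
          * |γ₁ * φ - 1|) := by
  have hφ' : 0 ≤ φ * (1 - φ) := mul_nonneg hφ.1.le (sub_nonneg.2 hφ.2.le)
  obtain ⟨hle, hge⟩ := stmt13_general φ γ₁ γ₂ hΔ
  exact ⟨fun h => hle (mul_nonneg (sub_nonneg.2 h) hφ'),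
    fun h => hge (mul_nonpos_of_nonpos_of_nonneg (sub_nonpos.2 h.2.le) hφ')⟩
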